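/- For i, j ≥ 1, the number of modern-synchronized Tamari intervals with i canopy entries equal to 1 and j canopy entries equal to 0 equals the Narayana number (1/(i+j-1)) · C(i+j-1, i) · C(i+j-1, j). -/

import Mathlib

/-- Binary trees: a leaf or a binary node with two subtrees. -/
inductive BT : Type
  | leaf : BT
  | node : BT → BT → BT

namespace BT

/-- Number of binary (internal) nodes. -/
def size : BT → ℕ
  | leaf => 0
  | node l r => l.size + r.size + 1

/-- One right rotation somewhere in the tree: ((A,B),C) ↦ (A,(B,C)). -/
inductive Rot : BT → BT → Prop
  | rotate (A B C : BT) : Rot (node (node A B) C) (node A (node B C))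
  | left {l l' : BT} (r : BT) : Rot l l' → Rot (node l r) (node l' r)
  | right (l : BT) {r r' : BT} : Rot r r' → Rot (node l r) (node l r')

/-- Tamari order: reflexive-transitive closure of right rotation. -/
def tle (T T' : BT) : Prop := Relation.ReflTransGen Rot T T'

/-- Bracket-vector: sizes of right subtrees of nodes, in infix order. -/
def bracket : BT → List ℕ
  | leaf => []
  | node l r => bracket l ++ r.size :: bracket r

/-- Dual bracket-vector: sizes of left subtrees of nodes, in infix order. -/
def dualBracket : BT → List ℕ
  | leaf => []
  | node l r => dualBracket l ++ l.size :: dualBracket r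

/-- Canopy word: for each leaf (left to right), 1 if it is a left child, 0 if a right child;
the argument `b` is the value assigned to the tree if it is itself a leaf. -/
def canopyAux (b : ℕ) : BT → List ℕ
  | leaf => [b]
  | node l r => canopyAux 1 l ++ canopyAux 0 r

/-- Canopy-vector of a binary tree. -/
def canopy (T : BT) : List ℕ := canopyAux 1 T

/-- Left-right mirror. -/
def mir : BT → BT
  | leaf => leaf
  | node l r => node (mir r) (mir l)

/-- Tamari interval of size n. -/
def interval (p : BT × BT) (n : ℕ) : Prop :=
  p.1.size = n ∧ p.2.size = n ∧ tle p.1 p.2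

/-- Tamari interval (of unspecified size). -/
def isInt (p : BT × BT) : Prop := p.1.size = p.2.size ∧ tle p.1 p.2

/-- The rise operation (T,T') ↦ ((T,ε),(ε,T')). -/
def riseF (p : BT × BT) : BT × BT := (node p.1 leaf, node leaf p.2)

/-- An interval is modern when its rise is again an interval. -/
def modern (p : BT × BT) : Prop := tle (node p.1 leaf) (node leaf p.2)

/-- Infinitely modern: every iterated rise is an interval. -/
def infModern (p : BT × BT) : Prop :=
  ∀ k : ℕ, tle ((riseF^[k] p).1) ((riseF^[k] p).2)

/-- Synchronized: equal canopies. -/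
def synced (p : BT × BT) : Prop := canopy p.1 = canopy p.2

/-- Self-dual: equal to its dual (mir T', mir T). -/
def selfDual (p : BT × BT) : Prop := mir p.2 = p.1 ∧ mir p.1 = p.2

/-- Number of positions where the two canopies agree. -/
def agreeCount (p : BT × BT) : ℕ :=
  ((List.range (p.1.size + 1)).filter
    (fun i => (canopy p.1).getD i 0 == (canopy p.2).getD i 0)).length

/-- Number of canopy positions of joint type (a on top, b on bottom), for an interval (T,T')
with T' the upper tree. -/
def typeCount (a b : ℕ) (p : BT × BT) : ℕ :=
  ((List.range (p.1.size + 1)).filter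
    (fun i => ((canopy p.2).getD i 0 == a) && ((canopy p.1).getD i 0 == b))).length

end BT

/-!
Entrywise along the Tamari order the canopy and the bracket-vector are increasing. For a modern
synchronized interval `(T, U)` with common canopy `c`, this makes `c` followed by `0` entrywise at
most `1` followed by `c`, so `c` is weakly decreasing. The trees with such a canopy are the
caterpillars, in which every node has a leaf as a child, and they are encoded by words recording
on which side of each node that leaf lies. On caterpillars with a common canopy the Tamari order
becomes dominance of the numbers of `true` letters in all suffixes: bracket-vectors give one
direction, and moving the first `true` to the front by rotations gives the other.

Such pairs of words are pairs of lattice paths with common endpoints, one staying weakly on one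
side of the other. They are counted by the determinant
`C(m, a) * C(m, b) - C(m, a + 1) * C(m, b - 1)`, which obeys the same recurrence, obtained by
removing the first letter of both words, and the same boundary condition at `b = a + 1`.
-/

/-- A word `w` suffix-dominates a word `v` of the same length when every suffix of `w` contains at
least as many letters `true` as the suffix of `v` of the same length. This is the Tamari order on
caterpillars with a common canopy. -/
structure SuffixDominates (w v : List Bool) : Prop where
  length_eq : w.length = v.length
  count_drop_le : ∀ k, (v.drop k).count true ≤ (w.drop k).count true

namespace SuffixDominates

variable {w v : List Bool} {x y : Bool}

theorem count_le (h : SuffixDominates w v) : v.count true ≤ w.count true := by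
  simpa only [List.drop_zero] using h.count_drop_le 0

theorem cons_cons_iff : SuffixDominates (x :: w) (y :: v) ↔
    SuffixDominates w v ∧ (y :: v).count true ≤ (x :: w).count true := by
  refine ⟨fun h ↦ ⟨⟨by simpa using h.length_eq, fun k ↦ h.count_drop_le (k + 1)⟩, h.count_le⟩, ?_⟩
  rintro ⟨h, hcount⟩
  refine ⟨congrArg (· + 1) h.length_eq, fun k ↦ ?_⟩
  cases k with
  | zero => exact hcount
  | succ k => exact h.count_drop_le k

theorem replace_true_false (h : SuffixDominates w v) (hcount : v.count true < w.count true) :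
    SuffixDominates (w.replace true false) v := by
  induction w generalizing v with
  | nil => simp at hcount
  | cons x w ih =>
    obtain _ | ⟨y, v⟩ := v
    · simpa using h.length_eq
    obtain ⟨hwv, -⟩ := cons_cons_iff.1 h
    cases x with
    | true =>
      rw [List.replace_cons_self, cons_cons_iff]
      exact ⟨hwv, by simpa [Nat.lt_succ_iff] using hcount⟩
    | false =>
      have hlt : v.count true < w.count true := by grind
      have hdom := ih hwv hlt
      have hmem : true ∈ w := List.count_pos_iff.1 (by omega)
      exact cons_cons_iff.2 ⟨hdom, by grind⟩

end SuffixDominates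

theorem forall₂_le_trans {α : Type*} [Preorder α] {l₁ l₂ l₃ : List α}
    (h₁₂ : List.Forall₂ (· ≤ ·) l₁ l₂) (h₂₃ : List.Forall₂ (· ≤ ·) l₂ l₃) :
    List.Forall₂ (· ≤ ·) l₁ l₃ := by
  induction h₁₂ generalizing l₃ with
  | nil => exact h₂₃
  | cons hab _ ih =>
    obtain _ | ⟨hbc, h₂₃⟩ := h₂₃
    exact .cons (hab.trans hbc) (ih h₂₃)

theorem countP_le_of_forall₂_le {α : Type*} [Preorder α] [DecidableLE α] {l₁ l₂ : List α}
    (h : List.Forall₂ (· ≤ ·) l₁ l₂) (m : α) : l₂.countP (· ≤ m) ≤ l₁.countP (· ≤ m) := by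
  induction h with
  | nil => exact le_rfl
  | @cons a b _ _ hab _ ih =>
    have hm : b ≤ m → a ≤ m := hab.trans
    simp only [List.countP_cons, decide_eq_true_eq]
    split_ifs <;> first | omega | tauto

namespace BT

section TamariOrder

variable {T U V : BT}

theorem tle.trans (hTU : tle T U) (hUV : tle U V) : tle T V :=
  Relation.ReflTransGen.trans hTU hUV

theorem tle.node_left (h : tle T U) (r : BT) : tle (node T r) (node U r) :=
  h.lift (node · r) fun _ _ ↦ Rot.left r

theorem tle.node_right (l : BT) (h : tle T U) : tle (node l T) (node l U) :=
  h.lift (node l) fun _ _ ↦ Rot.right l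

theorem tle_rotate (A B C : BT) : tle (node (node A B) C) (node A (node B C)) :=
  .single (.rotate A B C)

theorem Rot.size_eq (h : Rot T U) : T.size = U.size := by
  induction h with
  | rotate A B C => simp only [size]; omega
  | left r _ ih => simp only [size, ih]
  | right l _ ih => simp only [size, ih]

theorem Rot.bracket_le (h : Rot T U) : List.Forall₂ (· ≤ ·) T.bracket U.bracket := by
  induction h with
  | rotate A B C =>
    simp only [bracket, size, List.append_assoc, List.cons_append]
    exact List.rel_append (List.forall₂_refl _) (.cons (by omega) (List.forall₂_refl _))
  | left r _ ih => exact List.rel_append ih (List.forall₂_refl _)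
  | right l h ih => exact List.rel_append (List.forall₂_refl _) (.cons h.size_eq.le ih)

theorem canopyAux_mono (T : BT) {b c : ℕ} (h : b ≤ c) :
    List.Forall₂ (· ≤ ·) (T.canopyAux b) (T.canopyAux c) := by
  cases T with
  | leaf => exact .cons h .nil
  | node l r => exact List.forall₂_refl _

theorem Rot.canopyAux_le (h : Rot T U) (b : ℕ) :
    List.Forall₂ (· ≤ ·) (T.canopyAux b) (U.canopyAux b) := by
  induction h generalizing b with
  | rotate A B C =>
    simp only [canopyAux, List.append_assoc]
    exact List.rel_append (List.forall₂_refl _)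
      (List.rel_append (canopyAux_mono B zero_le_one) (List.forall₂_refl _))
  | left r _ ih => exact List.rel_append (ih 1) (List.forall₂_refl _)
  | right l _ ih => exact List.rel_append (List.forall₂_refl _) (ih 0)

theorem tle.forall₂_le {f : BT → List ℕ}
    (hf : ∀ {T U : BT}, Rot T U → List.Forall₂ (· ≤ ·) (f T) (f U)) (h : tle T U) :
    List.Forall₂ (· ≤ ·) (f T) (f U) := by
  induction h with
  | refl => exact List.forall₂_refl _
  | tail _ hrot ih => exact forall₂_le_trans ih (hf hrot)

theorem pairwise_canopy_of_modern_of_synced (hU : U ≠ leaf) (hmod : modern (T, U))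
    (hsync : synced (T, U)) : T.canopy.Pairwise (· ≥ ·) := by
  have hU01 : U.canopyAux 0 = U.canopy := by
    cases U with
    | leaf => contradiction
    | node l r => rfl
  have hshift : List.Forall₂ (· ≤ ·) (T.canopy ++ [0]) (1 :: T.canopy) := by
    have := tle.forall₂_le (f := canopy) (·.canopyAux_le 1) hmod
    rwa [canopy, canopy, canopyAux, canopyAux, canopyAux, canopyAux, hU01, ← hsync] at this
  have hchain : (1 :: T.canopy ++ [0]).IsChain (· ≥ ·) :=
    List.isChain_cons_append_singleton_iff_forall₂.2 hshift.flip
  exact (List.pairwise_append.1 hchain.pairwise).1.of_cons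

end TamariOrder

section Caterpillar

/-- The caterpillar of a word, a tree in which every node has a leaf as a child. Reading the word
from the root, a letter `true` stands for a node whose left child is a leaf and a letter `false`
for a node whose right child is a leaf; the last node, with two leaves, has no letter. -/
def caterpillar : List Bool → BT
  | [] => node leaf leaf
  | true :: w => node leaf (caterpillar w)
  | false :: w => node (caterpillar w) leaf

@[simp]
theorem size_caterpillar (w : List Bool) : (caterpillar w).size = w.length + 1 := by
  induction w with
  | nil => rfl
  | cons x w ih => cases x <;> simp [caterpillar, size, ih]

theorem caterpillar_ne_leaf (w : List Bool) : caterpillar w ≠ leaf := by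
  intro h
  simpa [size] using congrArg size h

theorem caterpillar_injective : Function.Injective caterpillar := by
  intro w v h
  induction w generalizing v with
  | nil => rcases v with _ | ⟨_ | _, v⟩ <;> grind [caterpillar, caterpillar_ne_leaf]
  | cons x w ih =>
    cases x <;> rcases v with _ | ⟨_ | _, v⟩ <;> grind [caterpillar, caterpillar_ne_leaf]

theorem canopyAux_caterpillar (b : ℕ) (w : List Bool) : (caterpillar w).canopyAux b =
    List.replicate (w.count true + 1) 1 ++ List.replicate (w.count false + 1) 0 := by
  induction w generalizing b with
  | nil => rfl
  | cons x w ih =>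
    cases x
    · simp [caterpillar, canopyAux, ih, List.replicate_succ']
    · simp [caterpillar, canopyAux, ih, List.replicate_succ]

theorem count_one_canopy_caterpillar (w : List Bool) :
    (caterpillar w).canopy.count 1 = w.count true + 1 := by
  simp [canopy, canopyAux_caterpillar, List.count_replicate]

theorem count_zero_canopy_caterpillar (w : List Bool) :
    (caterpillar w).canopy.count 0 = w.count false + 1 := by
  simp [canopy, canopyAux_caterpillar, List.count_replicate]

theorem zero_mem_canopyAux_node (b : ℕ) (l r : BT) : 0 ∈ (node l r).canopyAux b := by
  induction r generalizing b l with
  | leaf => exact List.mem_append_right _ (List.mem_singleton_self 0)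
  | node l' r' _ ih => exact List.mem_append_right _ (ih 0 l')

theorem one_mem_canopyAux_node (b : ℕ) (l r : BT) : 1 ∈ (node l r).canopyAux b := by
  induction l generalizing b r with
  | leaf => exact List.mem_append_left _ (List.mem_singleton_self 1)
  | node l' r' ih _ => exact List.mem_append_left _ (ih 1 r')

theorem exists_caterpillar_eq {T : BT} {b : ℕ} (h : (T.canopyAux b).Pairwise (· ≥ ·))
    (hT : T ≠ leaf) : ∃ w, caterpillar w = T := by
  induction T generalizing b with
  | leaf => contradiction
  | node l r ihl ihr =>
    obtain ⟨hl, hr, hlr⟩ := List.pairwise_append.1 h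
    cases l with
    | leaf =>
      cases r with
      | leaf => exact ⟨[], rfl⟩
      | node r₁ r₂ =>
        obtain ⟨w, hw⟩ := ihr hr (by simp)
        exact ⟨true :: w, congrArg (node leaf) hw⟩
    | node l₁ l₂ =>
      cases r with
      | leaf =>
        obtain ⟨w, hw⟩ := ihl hl (by simp)
        exact ⟨false :: w, congrArg (node · leaf) hw⟩
      | node r₁ r₂ =>
        have : (0 : ℕ) ≥ 1 :=
          hlr 0 (zero_mem_canopyAux_node _ _ _) 1 (one_mem_canopyAux_node _ _ _)
        contradiction

-- A letter `true` with `n` letters after it contributes the bracket entry `n + 1`; every other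
-- bracket entry of a caterpillar is `0`.
theorem countP_le_bracket_caterpillar (m : ℕ) (w : List Bool) :
    (caterpillar w).bracket.countP (· ≤ m) = w.count false + 1 + (w.rtake m).count true := by
  induction w with
  | nil => simp [caterpillar, bracket, size]
  | cons x w ih =>
    have hrtake : (x :: w).rtake m = if w.length < m then x :: w.rtake m else w.rtake m := by
      unfold List.rtake
      split_ifs with hm
      · simp [Nat.sub_eq_zero_of_le hm, Nat.sub_eq_zero_of_le hm.le]
      · simp [Nat.succ_sub (not_lt.1 hm)]
    cases x <;> simp only [caterpillar, bracket, size, size_caterpillar] <;> grind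

theorem tle_caterpillar_false_true (w : List Bool) :
    tle (caterpillar (false :: w)) (caterpillar (true :: w)) := by
  induction w with
  | nil => exact tle_rotate _ _ _
  | cons x w ih =>
    cases x with
    | true => exact (tle_rotate _ _ _).trans (ih.node_right leaf)
    | false => exact (ih.node_left leaf).trans (tle_rotate _ _ _)

theorem tle_caterpillar_true_cons_replace {w : List Bool} (h : true ∈ w) :
    tle (caterpillar (false :: w)) (caterpillar (true :: w.replace true false)) := by
  induction w with
  | nil => simp at h
  | cons x w ih =>
    cases x with
    | true => exact tle_rotate _ _ _
    | false => exact ((ih (by simpa using h)).node_left leaf).trans (tle_rotate _ _ _)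

theorem tle_caterpillar_of_suffixDominates {w v : List Bool} (h : SuffixDominates w v)
    (hcount : w.count true = v.count true) : tle (caterpillar w) (caterpillar v) := by
  induction v generalizing w with
  | nil =>
    obtain rfl : w = [] := List.length_eq_zero_iff.1 h.length_eq
    exact .refl
  | cons y v ih =>
    obtain _ | ⟨x, w⟩ := w
    · simpa using h.length_eq
    obtain ⟨hwv, -⟩ := SuffixDominates.cons_cons_iff.1 h
    match x, y with
    | true, true => exact (ih hwv (by simpa using hcount)).node_right leaf
    | false, false => exact (ih hwv (by simpa using hcount)).node_left leaf
    | true, false =>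
      have := hwv.count_le
      simp at hcount
      omega
    | false, true =>
      have hlt : w.count true = v.count true + 1 := by simpa using hcount
      have hmem : true ∈ w := List.count_pos_iff.1 (by omega)
      have hreplace : (w.replace true false).count true = v.count true := by grind
      exact (tle_caterpillar_true_cons_replace hmem).trans
        ((ih (hwv.replace_true_false (by omega)) hreplace).node_right leaf)

theorem tle.suffixDominates {w v : List Bool} (h : tle (caterpillar w) (caterpillar v))
    (hlen : w.length = v.length) (hcount : w.count true = v.count true) : SuffixDominates w v := by
  have hrtake (m : ℕ) : (v.rtake m).count true ≤ (w.rtake m).count true := by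
    have := countP_le_of_forall₂_le (h.forall₂_le Rot.bracket_le) m
    rw [countP_le_bracket_caterpillar, countP_le_bracket_caterpillar] at this
    grind
  refine ⟨hlen, fun k ↦ ?_⟩
  rcases le_total k w.length with hk | hk
  · simpa [List.rtake, ← hlen, Nat.sub_sub_self hk] using hrtake (w.length - k)
  · simp [List.drop_of_length_le (hlen ▸ hk)]

theorem isInt_modern_synced_iff {T U : BT} (hT : T ≠ leaf) :
    isInt (T, U) ∧ modern (T, U) ∧ synced (T, U) ↔
      ∃ w v, SuffixDominates w v ∧ w.count true = v.count true ∧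
        caterpillar w = T ∧ caterpillar v = U := by
  constructor
  · rintro ⟨⟨hsize, htle⟩, hmod, hsync⟩
    have hU : U ≠ leaf := by
      rintro rfl
      cases T <;> simp_all [size]
    have hpair := pairwise_canopy_of_modern_of_synced hU hmod hsync
    obtain ⟨w, rfl⟩ := exists_caterpillar_eq hpair hT
    obtain ⟨v, rfl⟩ := exists_caterpillar_eq (hsync ▸ hpair) hU
    have hlen : w.length = v.length := by simpa using hsize
    have hcount : w.count true = v.count true := by
      simpa [count_one_canopy_caterpillar] using congrArg (List.count 1) hsync
    exact ⟨w, v, htle.suffixDominates hlen hcount, hcount, rfl, rfl⟩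
  · rintro ⟨w, v, hdom, hcount, rfl, rfl⟩
    have htle := tle_caterpillar_of_suffixDominates hdom hcount
    have hlen := hdom.length_eq
    refine ⟨⟨by simp [hlen], htle⟩, (htle.node_left leaf).trans (tle_caterpillar_false_true v), ?_⟩
    have hcount' : w.count false = v.count false := by grind
    simp only [synced, canopy, canopyAux_caterpillar, hcount, hcount']

end Caterpillar

end BT

/-- The pairs of words of length `m` with `a` and `b` letters `true`, the first suffix-dominating
the second. The counts are integers so that removing a first letter `true` needs no case
distinction. -/
def dominatingPairs (m : ℕ) (a b : ℤ) : Set (List Bool × List Bool) :=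
  {x | SuffixDominates x.1 x.2 ∧ x.1.length = m ∧ x.1.count true = a ∧ x.2.count true = b}

/-- The binomial coefficient with an integer lower argument, zero when that argument is negative. -/
def intChoose (n : ℕ) (k : ℤ) : ℤ := if 0 ≤ k then n.choose k.toNat else 0

section IntChoose

theorem intChoose_natCast (n k : ℕ) : intChoose n k = n.choose k := by simp [intChoose]

theorem intChoose_of_neg (n : ℕ) {k : ℤ} (hk : k < 0) : intChoose n k = 0 :=
  if_neg hk.not_ge

theorem intChoose_zero_left (k : ℤ) : intChoose 0 k = if k = 0 then 1 else 0 := by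
  rcases lt_or_ge k 0 with hk | hk
  · rw [intChoose_of_neg 0 hk, if_neg hk.ne]
  · lift k to ℕ using hk
    rw [intChoose_natCast]
    cases k with
    | zero => rfl
    | succ k => simp [Nat.cast_add_one_ne_zero]

theorem intChoose_succ_left (n : ℕ) (k : ℤ) :
    intChoose (n + 1) k = intChoose n k + intChoose n (k - 1) := by
  rcases lt_or_ge k 0 with hk | hk
  · simp only [intChoose_of_neg _ hk, intChoose_of_neg n (by omega : k - 1 < 0), add_zero]
  · lift k to ℕ using hk
    cases k with
    | zero => simp [intChoose]
    | succ k =>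
      rw [show ((k + 1 : ℕ) : ℤ) - 1 = k by push_cast; ring]
      simp only [intChoose_natCast, Nat.choose_succ_succ']
      push_cast
      ring

theorem narayana_eq_det_intChoose (p q : ℕ) :
    ((p + q + 1 : ℕ) : ℤ) * (intChoose (p + q) p * intChoose (p + q) p -
      intChoose (p + q) (p + 1) * intChoose (p + q) (p - 1)) =
    (p + q + 1).choose (p + 1) * (p + q + 1).choose (q + 1) := by
  have hA : ((p + q + 1).choose (p + 1) : ℤ) = intChoose (p + q) (p + 1) + intChoose (p + q) p := by
    simpa [← intChoose_natCast] using intChoose_succ_left (p + q) (p + 1)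
  have hB : ((p + q + 1).choose (q + 1) : ℤ) = intChoose (p + q) p + intChoose (p + q) (p - 1) := by
    rw [← intChoose_succ_left, intChoose_natCast,
      Nat.choose_symm_of_eq_add (by omega : p + q + 1 = (q + 1) + p)]
  have hp : ((p : ℤ) + q + 1) * intChoose (p + q) p =
      (p + q + 1).choose (p + 1) * (p + 1) := by
    rw [intChoose_natCast]
    exact_mod_cast Nat.add_one_mul_choose_eq (p + q) p
  have hq : ((p : ℤ) + q + 1) * intChoose (p + q) p =
      (p + q + 1).choose (q + 1) * (q + 1) := by
    rw [intChoose_natCast, Nat.choose_symm_add]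
    exact_mod_cast Nat.add_one_mul_choose_eq (p + q) q
  rw [eq_sub_of_add_eq hA.symm, eq_sub_of_add_eq' hB.symm]
  push_cast
  linear_combination ((p + q + 1).choose (q + 1) : ℤ) * hp + ((p + q + 1).choose (p + 1) : ℤ) * hq

end IntChoose

section DominatingPairs

theorem finite_dominatingPairs (m : ℕ) (a b : ℤ) : (dominatingPairs m a b).Finite := by
  refine ((List.finite_length_eq Bool m).prod (List.finite_length_eq Bool m)).subset ?_
  rintro ⟨w, v⟩ ⟨hdom, hlen, -⟩
  exact ⟨hlen, hdom.length_eq.symm.trans hlen⟩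

theorem dominatingPairs_eq_empty {m : ℕ} {a b : ℤ} (h : a < b) : dominatingPairs m a b = ∅ := by
  refine Set.eq_empty_of_forall_notMem ?_
  rintro ⟨w, v⟩ ⟨hdom, -, hw, hv⟩
  have : v.count true ≤ w.count true := hdom.count_le
  dsimp only at hw hv
  omega

theorem dominatingPairs_zero (a b : ℤ) :
    dominatingPairs 0 a b = if a = 0 ∧ b = 0 then {([], [])} else ∅ := by
  ext ⟨w, v⟩
  constructor
  · rintro ⟨hdom, hlen, hw, hv⟩
    obtain rfl : w = [] := List.length_eq_zero_iff.1 hlen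
    obtain rfl : v = [] := List.length_eq_zero_iff.1 hdom.length_eq.symm
    rw [if_pos ⟨hw.symm, hv.symm⟩]
    rfl
  · intro hwv
    split_ifs at hwv with hab
    · obtain ⟨rfl, rfl⟩ := hab
      obtain ⟨rfl, rfl⟩ := Prod.mk.inj hwv
      exact ⟨⟨rfl, fun _ ↦ le_rfl⟩, rfl, rfl, rfl⟩
    · exact hwv.elim

theorem dominatingPairs_succ {m : ℕ} {a b : ℤ} (h : b ≤ a) :
    dominatingPairs (m + 1) a b = ⋃ x : Bool × Bool,
      Prod.map (x.1 :: ·) (x.2 :: ·) '' dominatingPairs m (a - x.1.toInt) (b - x.2.toInt) := by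
  have hcons (x : Bool) (w : List Bool) :
      ((x :: w).count true : ℤ) = w.count true + x.toInt := by cases x <;> simp
  ext ⟨w, v⟩
  simp only [Set.mem_iUnion, Set.mem_image, Prod.exists, Prod.map_apply, Prod.mk.injEq]
  constructor
  · rintro ⟨hdom, hlen, hw, hv⟩
    obtain _ | ⟨x, w⟩ := w
    · simp at hlen
    obtain _ | ⟨y, v⟩ := v
    · simpa using hdom.length_eq
    refine ⟨x, y, w, v, ⟨(SuffixDominates.cons_cons_iff.1 hdom).1, Nat.succ.inj hlen, ?_, ?_⟩,
      rfl, rfl⟩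
    · exact eq_sub_of_add_eq ((hcons x w).symm.trans hw)
    · exact eq_sub_of_add_eq ((hcons y v).symm.trans hv)
  · rintro ⟨x, y, w, v, ⟨hdom, hlen, hw, hv⟩, ⟨rfl, rfl⟩, rfl, rfl⟩
    have hw' : ((x :: w).count true : ℤ) = a := (hcons x w).trans (eq_sub_iff_add_eq.1 hw)
    have hv' : ((y :: v).count true : ℤ) = b := (hcons y v).trans (eq_sub_iff_add_eq.1 hv)
    exact ⟨SuffixDominates.cons_cons_iff.2 ⟨hdom, by omega⟩, congrArg (· + 1) hlen, hw', hv'⟩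

theorem ncard_dominatingPairs_succ {m : ℕ} {a b : ℤ} (h : b ≤ a) :
    (dominatingPairs (m + 1) a b).ncard =
      ∑ x : Bool × Bool, (dominatingPairs m (a - x.1.toInt) (b - x.2.toInt)).ncard := by
  rw [dominatingPairs_succ h, Set.ncard_iUnion_of_finite
    (fun x ↦ (finite_dominatingPairs m _ _).image _), finsum_eq_sum_of_fintype]
  · exact Finset.sum_congr rfl fun x _ ↦
      Set.ncard_image_of_injective _ (List.cons_injective.prodMap List.cons_injective)
  · rintro ⟨x, y⟩ ⟨x', y'⟩ hne
    refine Set.disjoint_left.2 ?_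
    rintro _ ⟨p, -, rfl⟩ ⟨p', -, hp⟩
    simp only [Prod.map, Prod.mk.injEq, List.cons.injEq] at hp
    exact hne (Prod.ext hp.1.1.symm hp.2.1.symm)

theorem ncard_dominatingPairs (m : ℕ) {a b : ℤ} (h : b ≤ a + 1) :
    ((dominatingPairs m a b).ncard : ℤ) =
      intChoose m a * intChoose m b - intChoose m (a + 1) * intChoose m (b - 1) := by
  induction m generalizing a b with
  | zero =>
    rw [dominatingPairs_zero]
    simp only [intChoose_zero_left]
    split_ifs <;> first | omega | simp
  | succ m ih =>
    rcases h.eq_or_lt with rfl | hlt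
    · rw [dominatingPairs_eq_empty (lt_add_one a), Set.ncard_empty, add_sub_cancel_right]
      push_cast
      ring
    · rw [ncard_dominatingPairs_succ (by omega)]
      simp only [Fintype.sum_prod_type, Fintype.sum_bool, Bool.toInt, cond_true, cond_false,
        sub_zero]
      push_cast
      rw [ih (by omega), ih (by omega), ih (by omega), ih (by omega)]
      simp only [intChoose_succ_left, sub_add_cancel, add_sub_cancel_right]
      ring

end DominatingPairs

theorem setOf_modern_synced_eq_image (p q : ℕ) :
    {t : BT × BT | BT.isInt t ∧ BT.modern t ∧ BT.synced t ∧
        (BT.canopy t.1).count 1 = p + 1 ∧ (BT.canopy t.1).count 0 = q + 1} =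
      Prod.map BT.caterpillar BT.caterpillar '' dominatingPairs (p + q) p p := by
  ext ⟨T, U⟩
  constructor
  · rintro ⟨hint, hmod, hsync, hone, hzero⟩
    have hT : T ≠ .leaf := by
      rintro rfl
      simp [BT.canopy, BT.canopyAux] at hzero
    obtain ⟨w, v, hdom, hcount, rfl, rfl⟩ := (BT.isInt_modern_synced_iff hT).1 ⟨hint, hmod, hsync⟩
    rw [BT.count_one_canopy_caterpillar] at hone
    rw [BT.count_zero_canopy_caterpillar] at hzero
    refine ⟨(w, v), ⟨hdom, by grind, ?_, ?_⟩, rfl⟩ <;> dsimp only <;> omega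
  · rintro ⟨⟨w, v⟩, ⟨hdom, hlen, hw, hv⟩, ⟨rfl, rfl⟩⟩
    dsimp only at hdom hlen hw hv
    obtain ⟨hint, hmod, hsync⟩ := (BT.isInt_modern_synced_iff (BT.caterpillar_ne_leaf w)).2
      ⟨w, v, hdom, by omega, rfl, rfl⟩
    exact ⟨hint, hmod, hsync, (BT.count_one_canopy_caterpillar w).trans (by omega),
      (BT.count_zero_canopy_caterpillar w).trans (by grind)⟩

theorem count_modern_synchronized_intervals_bivariate (i j : ℕ) (hi : 1 ≤ i) (hj : 1 ≤ j) :
    (i + j - 1) * Set.ncard {p : BT × BT | BT.isInt p ∧ BT.modern p ∧ BT.synced p ∧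
        (BT.canopy p.1).count 1 = i ∧ (BT.canopy p.1).count 0 = j} =
      Nat.choose (i + j - 1) i * Nat.choose (i + j - 1) j := by
  obtain ⟨p, rfl⟩ := Nat.exists_eq_add_of_le' hi
  obtain ⟨q, rfl⟩ := Nat.exists_eq_add_of_le' hj
  rw [setOf_modern_synced_eq_image, Set.ncard_image_of_injective _
    (BT.caterpillar_injective.prodMap BT.caterpillar_injective),
    show p + 1 + (q + 1) - 1 = p + q + 1 by omega]
  have hdet := ncard_dominatingPairs (p + q) (lt_add_one (p : ℤ)).le
  exact_mod_cast hdet ▸ narayana_eq_det_intChoose p q
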